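/- arXiv:1407.4316 — 3 statements merged into one kernel-verified Lean document; each statement's English description precedes it below -/
import Mathlib

section
/- Let F be a field of characteristic zero, N ≥ 1, and g ∈ GL_N(F). Set θ(g) = (g⁻¹)ᵀ. Then the 2N×2N block matrix i(gθ) = [[0, g],[θ(g), 0]] is semisimple if and only if the N×N matrix g·θ(g) is semisimple. -/
open scoped Matrix

/-- A square matrix over a field is semisimple if the linear endomorphism it induces is
semisimple. -/
def Matrix.IsSemisimple {F : Type*} [Field F] {m : Type*} [Fintype m] [DecidableEq m]
    (g : Matrix m m F) : Prop :=
  Module.End.IsSemisimple (Matrix.toLin' g)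

/-!
The square of `[[0, A], [B, 0]]` is the block diagonal matrix with blocks `A * B` and `B * A`, which
are conjugate when `A` is invertible. So it is enough to see that an invertible endomorphism `f` is
semisimple as soon as some power `f ^ k` is, with `k` invertible in the base ring. This is Maschke's
argument: if `π` is a projection onto an `f`-invariant submodule that commutes with `f ^ k`, then
the average of the conjugates `fⁱ π f⁻ⁱ` over `i < k` is a projection onto the same submodule that
commutes with `f`.
-/

open LinearMap Module Module.End Polynomial

lemma commute_sum_conj_pow {A : Type*} [Ring A] {u : Aˣ} {b : A} {k : ℕ}
    (hub : Commute ((u : A) ^ k) b) :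
    Commute (u : A) (∑ i ∈ Finset.range k, (u : A) ^ i * b * (↑u⁻¹ : A) ^ i) := by
  let conj (i : ℕ) : A := (u : A) ^ i * b * (↑u⁻¹ : A) ^ i
  have hstep (i : ℕ) : u * conj i = conj (i + 1) * u := by
    simp only [conj, pow_succ' (u : A), pow_succ (↑u⁻¹ : A), mul_assoc, Units.inv_mul, mul_one]
  have hperiod : conj k = conj 0 := by
    simp only [conj, pow_zero, mul_one, one_mul]
    rw [hub.eq, mul_assoc, ← Units.val_pow_eq_pow_val, ← Units.val_pow_eq_pow_val, inv_pow,
      Units.mul_inv, mul_one]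
  have hshift : ∑ i ∈ Finset.range k, conj (i + 1) = ∑ i ∈ Finset.range k, conj i :=
    add_right_cancel (b := conj 0) <| by
      rw [← Finset.sum_range_succ', Finset.sum_range_succ, hperiod]
  calc u * ∑ i ∈ Finset.range k, conj i
      = (∑ i ∈ Finset.range k, conj (i + 1)) * u := by
        simp only [Finset.mul_sum, Finset.sum_mul, hstep]
    _ = (∑ i ∈ Finset.range k, conj i) * u := by rw [hshift]

lemma isSemisimpleModule_prod_iff {R M N : Type*} [Ring R] [AddCommGroup M] [Module R M]
    [AddCommGroup N] [Module R N] :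
    IsSemisimpleModule R (M × N) ↔ IsSemisimpleModule R M ∧ IsSemisimpleModule R N := by
  refine ⟨fun _ ↦ ⟨.of_injective (inl R M N) inl_injective,
    .of_injective (inr R M N) inr_injective⟩, fun ⟨_, _⟩ ↦ ?_⟩
  have hsup := IsSemisimpleModule.sup (IsSemisimpleModule.range (inl R M N))
    (IsSemisimpleModule.range (inr R M N))
  rw [sup_range_inl_inr] at hsup
  exact .congr Submodule.topEquiv.symm

section Endomorphisms

variable {R M : Type*} [CommRing R] [AddCommGroup M] [Module R M]

lemma isSemisimple_prodMap_iff {N : Type*} [AddCommGroup N] [Module R N] {f : End R M}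
    {g : End R N} :
    IsSemisimple (f.prodMap g : End R (M × N)) ↔ f.IsSemisimple ∧ g.IsSemisimple := by
  let e : AEval' (f.prodMap g) ≃ₗ[R[X]] AEval' f × AEval' g :=
    LinearEquiv.ofAEval _ ((AEval'.of f).prodCongr (AEval'.of g)) fun x ↦ by
      simp [AEval'.X_smul_of, Prod.smul_def]
  rw [IsSemisimple, e.isSemisimpleModule_iff, isSemisimpleModule_prod_iff, IsSemisimple,
    IsSemisimple]

lemma isSemisimple_iff_exists_isProj_commute {f : End R M} :
    f.IsSemisimple ↔ ∀ p ∈ invtSubmodule f, ∃ π : End R M, IsProj p π ∧ Commute π f := by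
  rw [isSemisimple_iff]
  refine forall₂_congr fun p hp ↦ ⟨fun ⟨q, hq, hpq⟩ ↦ ?_, fun ⟨π, hπ, hcomm⟩ ↦ ?_⟩
  · have hπ := Submodule.isIdempotentElem_projection hpq
    have hproj : IsProj p (p.projection q hpq) := by simpa using hπ.isProj_range
    exact ⟨_, hproj, hπ.commute_iff.mpr (by simpa using ⟨hp, hq⟩)⟩
  · exact ⟨ker π, (hπ.isIdempotentElem.commute_iff.mp hcomm).2, hπ.isCompl⟩

lemma mem_invtSubmodule_inv_of_commute_pow {u : (End R M)ˣ} {π : End R M} {p : Submodule R M}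
    {k : ℕ} (hk : k ≠ 0) (hπ : IsProj p π) (hp : p ∈ invtSubmodule (u : End R M))
    (hcomm : Commute π ((u : End R M) ^ k)) : p ∈ invtSubmodule (↑u⁻¹ : End R M) := by
  have hcomm_inv : Commute π (↑(u ^ k)⁻¹ : End R M) :=
    Commute.units_inv_right (by rwa [Units.val_pow_eq_pow_val])
  have hp_inv : p ∈ invtSubmodule (↑(u ^ k)⁻¹ : End R M) := by
    simpa only [hπ.range] using (hπ.isIdempotentElem.commute_iff.mp hcomm_inv).1
  obtain ⟨j, rfl⟩ := Nat.exists_eq_succ_of_ne_zero hk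
  have hu : (↑u⁻¹ : End R M) = (u : End R M) ^ j * ↑(u ^ (j + 1))⁻¹ := by
    rw [← Units.val_pow_eq_pow_val, ← Units.val_mul, pow_succ', mul_inv_rev, mul_inv_cancel_left]
  rw [hu]
  exact invtSubmodule.comp _ (p.le_comap_pow_of_le_comap hp j) hp_inv

/-- The average `k⁻¹ ∑_{i < k} uⁱ π u⁻ⁱ` of the conjugates of `π` by the first `k` powers of `u`,
used to turn a projection commuting with `u ^ k` into one commuting with `u`. -/
def conjPowAverage (u : (End R M)ˣ) (k : ℕ) [Invertible (k : R)] (π : End R M) : End R M :=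
  ⅟(k : R) • ∑ i ∈ Finset.range k, (u : End R M) ^ i * π * (↑u⁻¹ : End R M) ^ i

lemma commute_conjPowAverage {u : (End R M)ˣ} {k : ℕ} [Invertible (k : R)] {π : End R M}
    (hcomm : Commute π ((u : End R M) ^ k)) : Commute (conjPowAverage u k π) (u : End R M) :=
  (commute_sum_conj_pow hcomm.symm).symm.smul_left _

lemma isProj_conjPowAverage {u : (End R M)ˣ} {k : ℕ} [Invertible (k : R)] {π : End R M}
    {p : Submodule R M} (hπ : IsProj p π) (hp : p ∈ invtSubmodule (u : End R M))
    (hcomm : Commute π ((u : End R M) ^ k)) : IsProj p (conjPowAverage u k π) where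
  map_mem x := by
    rw [conjPowAverage, LinearMap.smul_apply, LinearMap.sum_apply]
    exact p.smul_mem _ (p.sum_mem fun i _ ↦ p.le_comap_pow_of_le_comap hp i (hπ.map_mem _))
  map_id x hx := by
    have hfix (i : ℕ) (hi : i ∈ Finset.range k) :
        ((u : End R M) ^ i * π * (↑u⁻¹ : End R M) ^ i) x = x := by
      have hp_inv := mem_invtSubmodule_inv_of_commute_pow
        (Nat.ne_zero_of_lt (Finset.mem_range.mp hi)) hπ hp hcomm
      have hmem : ((↑u⁻¹ : End R M) ^ i) x ∈ p := p.le_comap_pow_of_le_comap hp_inv i hx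
      rw [mul_apply, mul_apply, hπ.map_id _ hmem, ← mul_apply, ← Units.val_pow_eq_pow_val,
        ← Units.val_pow_eq_pow_val, inv_pow, Units.mul_inv, one_apply]
    rw [conjPowAverage, LinearMap.smul_apply, LinearMap.sum_apply, Finset.sum_congr rfl hfix,
      Finset.sum_const, Finset.card_range, ← Nat.cast_smul_eq_nsmul R, invOf_smul_smul]

theorem isSemisimple_of_isSemisimple_pow {f : End R M} {k : ℕ} (hf : IsUnit f)
    (hk : IsUnit (k : R)) (h : (f ^ k).IsSemisimple) : f.IsSemisimple := by
  obtain ⟨u, rfl⟩ := hf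
  obtain ⟨_⟩ := hk.nonempty_invertible
  rw [isSemisimple_iff_exists_isProj_commute] at h ⊢
  intro p hp
  obtain ⟨π, hπ, hcomm⟩ := h p (p.le_comap_pow_of_le_comap hp k)
  exact ⟨conjPowAverage u k π, isProj_conjPowAverage hπ hp hcomm, commute_conjPowAverage hcomm⟩

end Endomorphisms

section Matrices

variable {F n : Type*} [Field F] [Fintype n] [DecidableEq n]

lemma matrix_isSemisimple_pow_iff {A : Matrix n n F} {k : ℕ} (hA : IsUnit A)
    (hk : (k : F) ≠ 0) : (A ^ k).IsSemisimple ↔ A.IsSemisimple := by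
  rw [Matrix.IsSemisimple, Matrix.IsSemisimple, Matrix.toLin'_pow]
  exact ⟨isSemisimple_of_isSemisimple_pow (by simpa using hA) hk.isUnit, fun h ↦ h.pow k⟩

lemma matrix_isSemisimple_mul_comm {A B : Matrix n n F} (hA : IsUnit A) :
    (A * B).IsSemisimple ↔ (B * A).IsSemisimple := by
  refine (LinearEquiv.isSemisimple_iff _ _ (A.toLinearEquiv' hA.invertible) ?_).symm
  rw [Matrix.toLinearEquiv'_apply, ← Matrix.toLin'_mul, ← Matrix.toLin'_mul, Matrix.mul_assoc]

lemma matrix_isSemisimple_fromBlocks_diagonal_iff {m : Type*} [Fintype m] [DecidableEq m]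
    {A : Matrix m m F} {D : Matrix n n F} :
    (Matrix.fromBlocks A 0 0 D).IsSemisimple ↔ A.IsSemisimple ∧ D.IsSemisimple := by
  rw [Matrix.IsSemisimple, Matrix.IsSemisimple, Matrix.IsSemisimple, ← isSemisimple_prodMap_iff]
  let e := LinearEquiv.sumArrowLequivProdArrow m n F F
  have he (v : m ⊕ n → F) : e v = (v ∘ Sum.inl, v ∘ Sum.inr) := rfl
  refine LinearEquiv.isSemisimple_iff _ _ e (LinearMap.ext fun v ↦ ?_)
  simp [he, Matrix.fromBlocks_mulVec]

theorem stmt_2_general [NeZero (2 : F)] {A B : Matrix n n F} (hA : IsUnit A) (hB : IsUnit B) :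
    (Matrix.fromBlocks 0 A B 0).IsSemisimple ↔ (A * B).IsSemisimple := by
  have hsq : Matrix.fromBlocks 0 A B 0 ^ 2 = Matrix.fromBlocks (A * B) 0 0 (B * A) := by
    simp [pow_two, Matrix.fromBlocks_multiply]
  have hunit : IsUnit (Matrix.fromBlocks 0 A B 0) := by
    rw [← isUnit_pow_iff two_ne_zero, hsq, Matrix.isUnit_fromBlocks_zero₂₁]
    exact ⟨hA.mul hB, hB.mul hA⟩
  rw [← matrix_isSemisimple_pow_iff hunit (k := 2) (mod_cast NeZero.ne (2 : F)), hsq,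
    matrix_isSemisimple_fromBlocks_diagonal_iff, ← matrix_isSemisimple_mul_comm hA, and_self]

end Matrices

/-- For `g ∈ GL_N(F)` and `θ(g) = (g⁻¹)ᵀ`, the block matrix `[[0, g],[θ(g), 0]]` is
semisimple if and only if `g * θ(g)` is semisimple. -/
theorem stmt_2 {F : Type*} [Field F] [CharZero F] {N : ℕ} (hN : 1 ≤ N)
    (g : GL (Fin N) F) :
    (Matrix.fromBlocks 0 (g : Matrix (Fin N) (Fin N) F)
        (((g⁻¹ : GL (Fin N) F) : Matrix (Fin N) (Fin N) F)ᵀ) 0).IsSemisimple ↔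
    ((g : Matrix (Fin N) (Fin N) F) *
        ((g⁻¹ : GL (Fin N) F) : Matrix (Fin N) (Fin N) F)ᵀ).IsSemisimple :=
  stmt_2_general g.isUnit ((Matrix.isUnit_transpose _).mpr g⁻¹.isUnit)
end

section
/- Let F be a field of characteristic zero, γ ∈ M_n(F) a semisimple matrix, and M = {g ∈ GL_n(F) : gγ = γg} the centralizer of γ in GL_n(F). Let N, N' ∈ M_n(F) be nilpotent matrices each commuting with γ. Then γ + N and γ + N' are conjugate under GL_n(F) if and only if N and N' are conjugate under M. -/
/-! Conjugation by `g` carries the Jordan–Chevalley decomposition of `γ + N` to that of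
`g * (γ + N) * g⁻¹`. If the latter is `γ + N'`, uniqueness of the decomposition forces
`g * γ * g⁻¹ = γ` and `g * N * g⁻¹ = N'`, so `g` itself centralizes `γ`. -/

section

variable {F ι κ : Type*} [Field F] [Fintype ι] [DecidableEq ι] [Fintype κ] [DecidableEq κ]

theorem isSemisimple_iff_squarefree_minpoly {A : Matrix ι ι F} :
    A.IsSemisimple ↔ Squarefree (minpoly F A) := by
  rw [← Matrix.minpoly_toLin']
  exact ⟨Module.End.IsSemisimple.minpoly_squarefree, fun h =>
    Module.End.isSemisimple_of_squarefree_aeval_eq_zero h (minpoly.aeval F _)⟩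

theorem isSemisimple_algEquiv_apply_iff (e : Matrix ι ι F ≃ₐ[F] Matrix κ κ F)
    {A : Matrix ι ι F} : (e A).IsSemisimple ↔ A.IsSemisimple := by
  simp only [isSemisimple_iff_squarefree_minpoly, minpoly.algEquiv_eq]

theorem isNilpotent_isSemisimple_unique [PerfectField F] {N₁ S₁ N₂ S₂ : Matrix ι ι F}
    (hN₁ : IsNilpotent N₁) (hS₁ : S₁.IsSemisimple) (hN₂ : IsNilpotent N₂) (hS₂ : S₂.IsSemisimple)
    (hc₁ : Commute N₁ S₁) (hc₂ : Commute N₂ S₂) (h : N₁ + S₁ = N₂ + S₂) :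
    N₁ = N₂ ∧ S₁ = S₂ := by
  let φ : Matrix ι ι F ≃ₐ[F] Module.End F (ι → F) := Matrix.toLinAlgEquiv'
  have hφ : φ N₁ + φ S₁ = φ N₂ + φ S₂ := by rw [← map_add, h, map_add]
  exact (Module.End.isNilpotent_isSemisimple_unique (hN₁.map φ) hS₁ (hN₂.map φ) hS₂
    (hc₁.map φ) (hc₂.map φ) hφ).imp (fun hN => φ.injective hN) fun hS => φ.injective hS

theorem stmt_8_general [PerfectField F] {γ N N' : Matrix ι ι F} (hγ : γ.IsSemisimple)
    (hN : IsNilpotent N) (hN' : IsNilpotent N') (hNγ : Commute N γ) (hN'γ : Commute N' γ) :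
    (∃ g : GL ι F, γ + N' = (g : Matrix ι ι F) * (γ + N) * ((g⁻¹ : GL ι F) : Matrix ι ι F)) ↔
      ∃ m : GL ι F, Commute (m : Matrix ι ι F) γ ∧
        N' = (m : Matrix ι ι F) * N * ((m⁻¹ : GL ι F) : Matrix ι ι F) := by
  let conj (g : GL ι F) : Matrix ι ι F ≃ₐ[F] Matrix ι ι F :=
    MulSemiringAction.toAlgEquiv F _ (ConjAct.toConjAct g)
  constructor
  · rintro ⟨g, hg⟩
    have hsum : N' + γ = conj g N + conj g γ := calc
      N' + γ = γ + N' := add_comm N' γ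
      _ = conj g (γ + N) := hg
      _ = conj g N + conj g γ := by rw [map_add, add_comm]
    obtain ⟨hN_eq, hγ_eq⟩ := isNilpotent_isSemisimple_unique hN' hγ (hN.map (conj g))
      ((isSemisimple_algEquiv_apply_iff (conj g)).mpr hγ) hN'γ (hNγ.map (conj g)) hsum
    exact ⟨g, (Units.mul_inv_eq_iff_eq_mul g).mp hγ_eq.symm, hN_eq⟩
  · rintro ⟨m, hm, hN_eq⟩
    have hγ_fixed : conj m γ = γ := (Units.mul_inv_eq_iff_eq_mul m).mpr hm
    have hN_conj : conj m N = N' := hN_eq.symm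
    have hsum : γ + N' = conj m (γ + N) := by rw [map_add, hγ_fixed, hN_conj]
    exact ⟨m, hsum⟩

end

/-- Let `γ` be semisimple and `N, N'` nilpotent matrices commuting with `γ`.  Then
`γ + N` and `γ + N'` are conjugate under `GL_n(F)` if and only if `N` and `N'` are
conjugate under the centralizer `M = {g ∈ GL_n(F) : g γ = γ g}` of `γ`. -/
theorem stmt_8 {F : Type*} [Field F] [CharZero F] {n : ℕ}
    (γ N N' : Matrix (Fin n) (Fin n) F) (hγ : γ.IsSemisimple)
    (hN : IsNilpotent N) (hN' : IsNilpotent N')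
    (hNγ : N * γ = γ * N) (hN'γ : N' * γ = γ * N') :
    (∃ g : GL (Fin n) F, γ + N' =
        (g : Matrix (Fin n) (Fin n) F) * (γ + N) *
          ((g⁻¹ : GL (Fin n) F) : Matrix (Fin n) (Fin n) F)) ↔
    (∃ m : GL (Fin n) F, (m : Matrix (Fin n) (Fin n) F) * γ = γ * (m : Matrix (Fin n) (Fin n) F) ∧
        N' = (m : Matrix (Fin n) (Fin n) F) * N *
          ((m⁻¹ : GL (Fin n) F) : Matrix (Fin n) (Fin n) F)) :=
  stmt_8_general hγ hN hN' hNγ hN'γ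
end

section
/- Let F be a nontrivially normed field of characteristic zero, γ ∈ M_n(F) a semisimple matrix, and X ∈ M_n(F) a matrix such that γ lies in the topological closure of the conjugation orbit {gXg⁻¹ : g ∈ GL_n(F)}. Then there exists a nilpotent matrix N ∈ M_n(F) commuting with γ such that X is conjugate under GL_n(F) to γ + N. -/
/-!
The coefficients of the characteristic polynomial are continuous and conjugation invariant, so `γ`
and `X` have the same characteristic polynomial. Write `X = s + ν` (Jordan–Chevalley) with `s`
semisimple and `ν` nilpotent commuting with `s`; then `s` also has this characteristic polynomial.
A semisimple endomorphism is determined up to conjugacy by its characteristic polynomial: any simple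
`F[X]`-submodule for the first endomorphism embeds into the module of the second, and one splits it
off both. So some conjugation takes `s` to `γ`, and it takes `ν` to the desired `N`.
-/

open Polynomial
open scoped nonZeroDivisors

section Conjugacy

theorem isConj_iff_exists_eq_mul_mul_inv {M : Type*} [Monoid M] {a b : M} :
    IsConj a b ↔ ∃ c : Mˣ, b = c * a * ↑c⁻¹ := by
  simp only [IsConj, SemiconjBy, Units.eq_mul_inv_iff_mul_eq, eq_comm]

theorem exists_isNilpotent_commute_isConj_add {A : Type*} [Ring A] {s t ν : A} (hst : IsConj s t)
    (hν : IsNilpotent ν) (hcomm : Commute ν s) :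
    ∃ ν' : A, IsNilpotent ν' ∧ Commute ν' t ∧ IsConj (s + ν) (t + ν') := by
  obtain ⟨c, rfl⟩ := isConj_iff_exists_eq_mul_mul_inv.mp hst
  refine ⟨c * ν * ↑c⁻¹, ?_, ?_, isConj_iff_exists_eq_mul_mul_inv.mpr ⟨c, by noncomm_ring⟩⟩
  · obtain ⟨k, hk⟩ := hν
    exact ⟨k, by rw [Units.conj_pow, hk, mul_zero, zero_mul]⟩
  · simp only [commute_iff_eq, mul_assoc, Units.inv_mul_cancel_left]
    rw [hcomm.left_comm]

end Conjugacy

section Determinant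

variable {R : Type*} [CommRing R] {m : Type*} [Fintype m] [DecidableEq m]

section Reduced

variable [IsReduced R]

theorem isReduced_polynomial : IsReduced R[X] :=
  ⟨fun _ hp ↦ Polynomial.ext fun i ↦ (Polynomial.isNilpotent_iff.mp hp i).eq_zero⟩

theorem det_one_add_of_isNilpotent {N : Matrix m m R} (hN : IsNilpotent N) :
    (1 + N).det = 1 := by
  have hnil := (Matrix.isNilpotent_charpoly_sub_pow_of_isNilpotent hN.neg).map (evalRingHom 1)
  have heval := hnil.eq_zero
  rw [map_sub, map_pow, coe_evalRingHom, Matrix.eval_charpoly, eval_X, one_pow, map_one,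
    sub_neg_eq_add] at heval
  exact sub_eq_zero.mp heval

theorem det_add_of_isNilpotent_of_isUnit {M N : Matrix m m R} (hM : IsUnit M)
    (hN : IsNilpotent N) (hMN : Commute M N) : (M + N).det = M.det := by
  obtain ⟨u, rfl⟩ := hM
  have hnil : IsNilpotent ((↑u⁻¹ : Matrix m m R) * N) :=
    hMN.units_inv_left.isNilpotent_mul_left hN
  calc (u + N : Matrix m m R).det = (u * (1 + (↑u⁻¹ : Matrix m m R) * N) : Matrix m m R).det := by
        rw [mul_add, mul_one, Units.mul_inv_cancel_left]
    _ = (u : Matrix m m R).det := by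
        rw [Matrix.det_mul, det_one_add_of_isNilpotent hnil, mul_one]

theorem det_add_of_isNilpotent_of_mem_nonZeroDivisors {M N : Matrix m m R} (hM : M.det ∈ R⁰)
    (hN : IsNilpotent N) (hMN : Commute M N) : (M + N).det = M.det := by
  have : IsReduced (FractionRing R) := isReduced_localizationPreserves R⁰ _ inferInstance
  let φ := algebraMap R (FractionRing R)
  have hunit : IsUnit (φ.mapMatrix M) := by
    rw [Matrix.isUnit_iff_isUnit_det, ← RingHom.map_det]
    exact IsLocalization.map_units _ ⟨M.det, hM⟩
  apply IsFractionRing.injective R (FractionRing R)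
  rw [RingHom.map_det, RingHom.map_det, map_add]
  exact det_add_of_isNilpotent_of_isUnit hunit (hN.map _) (hMN.map _)

theorem matrix_charpoly_add_of_isNilpotent {A N : Matrix m m R} (hN : IsNilpotent N)
    (hAN : Commute A N) : (A + N).charpoly = A.charpoly := by
  have : IsReduced R[X] := isReduced_polynomial
  let ι : Matrix m m R →+* Matrix m m R[X] := C.mapMatrix
  have hcharmatrix : (A + N).charmatrix = A.charmatrix + ι (-N) := by
    rw [Matrix.charmatrix, Matrix.charmatrix, map_add, map_neg, sub_add_eq_sub_sub, sub_eq_add_neg]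
  have hcomm : Commute A.charmatrix (ι (-N)) :=
    (Matrix.scalar_commute _ (Commute.all _) _).sub_left (hAN.neg_right.map ι)
  rw [Matrix.charpoly, hcharmatrix]
  exact det_add_of_isNilpotent_of_mem_nonZeroDivisors A.charpoly_monic.mem_nonZeroDivisors
    (hN.neg.map ι) hcomm

theorem linearMap_charpoly_add_of_isNilpotent {V : Type*} [AddCommGroup V] [Module R V]
    [Module.Finite R V] [Module.Free R V] {f ν : Module.End R V} (hν : IsNilpotent ν)
    (hcomm : Commute f ν) : (f + ν).charpoly = f.charpoly := by
  let Φ := LinearMap.toMatrixAlgEquiv (Module.Free.chooseBasis R V)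
  rw [LinearMap.charpoly_def, map_add, LinearMap.charpoly_def]
  exact matrix_charpoly_add_of_isNilpotent (hν.map Φ) (hcomm.map Φ)

end Reduced

theorem sub_dvd_aeval_sub_aeval_of_commute {A : Type*} [Ring A] [Algebra R A] {a b : A}
    (hab : Commute a b) (p : R[X]) : a - b ∣ aeval a p - aeval b p := by
  simp only [aeval_eq_sum_range, ← Finset.sum_sub_distrib, ← smul_sub]
  exact Finset.dvd_sum fun i _ ↦ dvd_smul_of_dvd _ (hab.sub_dvd_pow_sub_pow i)

-- Over `R[X]`, the matrix `p • 1` is a multiple of the characteristic matrix of `A`; now take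
-- determinants.
theorem matrix_charpoly_dvd_pow_of_aeval_eq_zero {A : Matrix m m R} {p : R[X]}
    (hp : aeval A p = 0) : A.charpoly ∣ p ^ Fintype.card m := by
  let ι : Matrix m m R →ₐ[R] Matrix m m R[X] := CAlgHom.mapMatrix
  have hX : aeval (Matrix.scalarAlgHom m R (X : R[X])) p = Matrix.scalar m p := by
    rw [aeval_algHom_apply, aeval_X_left_apply, Matrix.scalarAlgHom_apply]
  have hA : aeval (ι A) p = 0 := by rw [aeval_algHom_apply, hp, map_zero]
  have hcomm : Commute (Matrix.scalarAlgHom m R X) (ι A) :=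
    Matrix.scalar_commute _ (Commute.all _) _
  obtain ⟨B, hB⟩ : A.charmatrix ∣ Matrix.scalar m p := by
    have hdvd := sub_dvd_aeval_sub_aeval_of_commute hcomm p
    rwa [hX, hA, sub_zero] at hdvd
  refine ⟨B.det, ?_⟩
  rw [Matrix.charpoly, ← Matrix.det_mul, ← hB, Matrix.scalar_apply, Matrix.det_diagonal,
    Finset.prod_const, Finset.card_univ]

theorem linearMap_charpoly_dvd_pow_of_aeval_eq_zero {V : Type*} [AddCommGroup V] [Module R V]
    [Module.Finite R V] [Module.Free R V] {f : Module.End R V} {p : R[X]} (hp : aeval f p = 0) :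
    ∃ k : ℕ, f.charpoly ∣ p ^ k := by
  let Φ := LinearMap.toMatrixAlgEquiv (Module.Free.chooseBasis R V)
  have hΦ : aeval (Φ f) p = 0 := by rw [aeval_algHom_apply, hp, map_zero]
  exact ⟨_, matrix_charpoly_dvd_pow_of_aeval_eq_zero hΦ⟩

end Determinant

theorem exists_ne_zero_aeval_apply_eq_zero_of_dvd_charpoly {F V : Type*} [Field F]
    [AddCommGroup V] [Module F V] [FiniteDimensional F V] {f : Module.End F V} {q : F[X]}
    (hq : Irreducible q) (hqf : q ∣ f.charpoly) : ∃ v : V, v ≠ 0 ∧ aeval f q v = 0 := by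
  obtain ⟨k, hk⟩ := linearMap_charpoly_dvd_pow_of_aeval_eq_zero (minpoly.aeval F f)
  obtain ⟨r, hr⟩ : q ∣ minpoly F f := hq.prime.dvd_of_dvd_pow (hqf.trans hk)
  have hrf : aeval f r ≠ 0 := fun h ↦ by
    have hr0 : r ≠ 0 :=
      right_ne_zero_of_mul (hr ▸ minpoly.ne_zero (Algebra.IsIntegral.isIntegral f))
    have hdvd : q * r ∣ 1 * r := by rw [one_mul, ← hr]; exact minpoly.dvd F f h
    exact hq.not_isUnit (isUnit_of_dvd_one ((mul_dvd_mul_iff_right hr0).mp hdvd))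
  obtain ⟨v, hv⟩ := DFunLike.ne_iff.mp hrf
  refine ⟨aeval f r v, hv, ?_⟩
  rw [← Module.End.mul_apply, ← map_mul, ← hr, minpoly.aeval, LinearMap.zero_apply]

theorem charpoly_eq_of_intertwining {R M N : Type*} [CommRing R]
    [AddCommGroup M] [Module R M] [Module.Finite R M] [Module.Free R M]
    [AddCommGroup N] [Module R N] [Module.Finite R N] [Module.Free R N]
    {f : Module.End R M} {g : Module.End R N} (e : M ≃ₗ[R] N)
    (he : ∀ v, e (f v) = g (e v)) : f.charpoly = g.charpoly := by
  have hconj : e.conj f = g := by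
    ext w
    rw [LinearEquiv.conj_apply_apply, he, LinearEquiv.apply_symm_apply]
  rw [← hconj, LinearEquiv.charpoly_conj]

section ActionCharpoly

section CommRing

variable {R : Type*} [CommRing R]
  {M : Type*} [AddCommGroup M] [Module R M] [Module R[X] M] [IsScalarTower R R[X] M]
  {N : Type*} [AddCommGroup N] [Module R N] [Module R[X] N] [IsScalarTower R R[X] N]

theorem aeval_lsmul_X_apply (p : R[X]) (v : M) :
    aeval (Algebra.lsmul R R M (X : R[X])) p v = p • v := by
  rw [aeval_algHom_apply, aeval_X_left_apply, Algebra.lsmul_coe]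

variable [Module.Finite R M] [Module.Free R M] [Module.Finite R N] [Module.Free R N]

variable (R M) in
/-- The characteristic polynomial of multiplication by `X` on an `R[X]`-module which is finite
free over `R`. For `M = Module.AEval' f` it is the characteristic polynomial of `f`, so conjugacy
of endomorphisms can be studied through `R[X]`-modules. -/
noncomputable def actionCharpoly : R[X] :=
  (Algebra.lsmul R R M (X : R[X])).charpoly

theorem actionCharpoly_smul (v : M) : actionCharpoly R M • v = 0 := by
  rw [← aeval_lsmul_X_apply, actionCharpoly, LinearMap.aeval_self_charpoly, LinearMap.zero_apply]

theorem actionCharpoly_monic : (actionCharpoly R M).Monic :=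
  LinearMap.charpoly_monic _

theorem natDegree_actionCharpoly [Nontrivial R] :
    (actionCharpoly R M).natDegree = Module.finrank R M :=
  LinearMap.charpoly_natDegree _

theorem actionCharpoly_eq_of_linearEquiv (e : M ≃ₗ[R[X]] N) :
    actionCharpoly R M = actionCharpoly R N :=
  charpoly_eq_of_intertwining (e.restrictScalars R) (e.map_smul X)

theorem actionCharpoly_prod :
    actionCharpoly R (M × N) = actionCharpoly R M * actionCharpoly R N := by
  rw [actionCharpoly, actionCharpoly, actionCharpoly, ← LinearMap.charpoly_prodMap]
  rfl

end CommRing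

variable {F : Type*} [Field F]

theorem actionCharpoly_aeval' {V : Type*} [AddCommGroup V] [Module F V] [FiniteDimensional F V]
    (f : Module.End F V) : actionCharpoly F (Module.AEval' f) = f.charpoly :=
  (charpoly_eq_of_intertwining (Module.AEval'.of f) fun v ↦
    (Module.AEval'.X_smul_of f v).symm).symm

variable {S : Type*} [AddCommGroup S] [Module F S] [Module F[X] S] [IsScalarTower F F[X] S]
  [FiniteDimensional F S] [IsSimpleModule F[X] S]
  {M : Type*} [AddCommGroup M] [Module F M] [Module F[X] M] [IsScalarTower F F[X] M]
  [FiniteDimensional F M]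
  {N : Type*} [AddCommGroup N] [Module F N] [Module F[X] N] [IsScalarTower F F[X] N]
  [FiniteDimensional F N]

variable (F S) in
theorem exists_irreducible_dvd_actionCharpoly_linearEquiv :
    ∃ q : F[X], Irreducible q ∧ q ∣ actionCharpoly F S ∧
      Nonempty (S ≃ₗ[F[X]] F[X] ⧸ Ideal.span {q}) := by
  obtain ⟨I, hI, ⟨e⟩⟩ := isSimpleModule_iff_quot_maximal.mp ‹IsSimpleModule F[X] S›
  obtain ⟨q, rfl⟩ := (IsPrincipalIdealRing.principal I).principal
  rw [Ideal.submodule_span_eq] at hI e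
  have hdvd : q ∣ actionCharpoly F S := by
    have hsmul := congrArg e
      (actionCharpoly_smul (R := F) (e.symm (Submodule.Quotient.mk 1)))
    rwa [map_smul, e.apply_symm_apply, map_zero, ← Submodule.Quotient.mk_smul, smul_eq_mul,
      mul_one, Submodule.Quotient.mk_eq_zero, Ideal.mem_span_singleton] at hsmul
  have hq0 : q ≠ 0 := ne_zero_of_dvd_ne_zero actionCharpoly_monic.ne_zero hdvd
  exact ⟨q, ((Ideal.span_singleton_prime hq0).mp hI.isPrime).irreducible, hdvd, ⟨e⟩⟩

theorem exists_injective_of_actionCharpoly_dvd (h : actionCharpoly F S ∣ actionCharpoly F N) :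
    ∃ f : S →ₗ[F[X]] N, Function.Injective f := by
  obtain ⟨q, hq, hqS, ⟨e⟩⟩ := exists_irreducible_dvd_actionCharpoly_linearEquiv F S
  obtain ⟨w, hw0, hqw⟩ := exists_ne_zero_aeval_apply_eq_zero_of_dvd_charpoly hq (hqS.trans h)
  rw [aeval_lsmul_X_apply] at hqw
  have hker : Ideal.span {q} ≤ LinearMap.ker (LinearMap.toSpanSingleton F[X] N w) := by
    rwa [Ideal.span_singleton_le_iff_mem, LinearMap.mem_ker, LinearMap.toSpanSingleton_apply]
  let f : S →ₗ[F[X]] N := Submodule.liftQ _ _ hker ∘ₗ e.toLinearMap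
  have hf : f (e.symm (Submodule.Quotient.mk 1)) = w := by
    simp only [f, LinearMap.comp_apply, LinearEquiv.coe_coe, e.apply_symm_apply,
      Submodule.liftQ_apply, LinearMap.toSpanSingleton_apply, one_smul]
  exact ⟨f, LinearMap.injective_of_ne_zero fun h0 ↦ hw0 <| by rw [← hf, h0, LinearMap.zero_apply]⟩

theorem finiteDimensional_polynomialSubmodule (T : Submodule F[X] M) : FiniteDimensional F T :=
  inferInstanceAs (FiniteDimensional F (T.restrictScalars F))

theorem exists_linearEquiv_prod_of_injective {R P Q : Type*} [Ring R]
    [AddCommGroup P] [Module R P] [AddCommGroup Q] [Module R Q]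
    [IsSemisimpleModule R Q] {f : P →ₗ[R] Q} (hf : Function.Injective f) :
    ∃ T : Submodule R Q, Nonempty (Q ≃ₗ[R] P × T) := by
  obtain ⟨T, hT⟩ := exists_isCompl (LinearMap.range f)
  exact ⟨T, ⟨(Submodule.prodEquivOfIsCompl _ T hT).symm ≪≫ₗ
    (LinearEquiv.ofInjective f hf).symm.prodCongr (.refl R T)⟩⟩

theorem nonempty_linearEquiv_of_actionCharpoly_eq [IsSemisimpleModule F[X] M]
    [IsSemisimpleModule F[X] N] (h : actionCharpoly F M = actionCharpoly F N) :
    Nonempty (M ≃ₗ[F[X]] N) := by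
  induction hd : Module.finrank F M using Nat.strong_induction_on generalizing M N with
  | _ d ih =>
  rcases subsingleton_or_nontrivial M with _ | _
  · have : Subsingleton N := by
      rw [← Module.finrank_zero_iff (R := F), ← natDegree_actionCharpoly, ← h,
        natDegree_actionCharpoly, Module.finrank_zero_of_subsingleton]
    exact ⟨0⟩
  · obtain ⟨S, hS⟩ := IsSemisimpleModule.exists_simple_submodule F[X] M
    have hSfin := finiteDimensional_polynomialSubmodule (F := F) S
    obtain ⟨M', ⟨eM⟩⟩ := exists_linearEquiv_prod_of_injective S.injective_subtype
    have hM'fin := finiteDimensional_polynomialSubmodule (F := F) M'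
    have hMS : actionCharpoly F M = actionCharpoly F S * actionCharpoly F M' := by
      rw [actionCharpoly_eq_of_linearEquiv eM, actionCharpoly_prod]
    obtain ⟨f, hf⟩ := exists_injective_of_actionCharpoly_dvd (h ▸ Dvd.intro _ hMS.symm)
    obtain ⟨N', ⟨eN⟩⟩ := exists_linearEquiv_prod_of_injective hf
    have hN'fin := finiteDimensional_polynomialSubmodule (F := F) N'
    have hNS : actionCharpoly F N = actionCharpoly F S * actionCharpoly F N' := by
      rw [actionCharpoly_eq_of_linearEquiv eN, actionCharpoly_prod]
    have hchar : actionCharpoly F M' = actionCharpoly F N' :=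
      mul_left_cancel₀ actionCharpoly_monic.ne_zero (hMS.symm.trans (h.trans hNS))
    have hlt : Module.finrank F M' < d := by
      have := IsSimpleModule.nontrivial F[X] S
      rw [← hd, (eM.restrictScalars F).finrank_eq, Module.finrank_prod]
      exact lt_add_of_pos_left _ Module.finrank_pos
    obtain ⟨e'⟩ := ih _ hlt hchar rfl
    exact ⟨eM ≪≫ₗ (LinearEquiv.refl _ _).prodCongr e' ≪≫ₗ eN.symm⟩

end ActionCharpoly

theorem isConj_of_linearEquiv_aeval' {R V : Type*} [CommRing R] [AddCommGroup V] [Module R V]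
    {f g : Module.End R V} (e : Module.AEval' f ≃ₗ[R[X]] Module.AEval' g) : IsConj f g := by
  let e' : V ≃ₗ[R] V :=
    Module.AEval'.of f ≪≫ₗ e.restrictScalars R ≪≫ₗ (Module.AEval'.of g).symm
  refine ⟨(LinearMap.GeneralLinearGroup.generalLinearEquiv R V).symm e', LinearMap.ext fun v ↦ ?_⟩
  change (Module.AEval'.of g).symm (e (Module.AEval'.of f (f v))) =
    g ((Module.AEval'.of g).symm (e (Module.AEval'.of f v)))
  rw [← Module.AEval'.X_smul_of, map_smul, Module.AEval'.of_symm_X_smul]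

section Endomorphism

variable {F V : Type*} [Field F] [AddCommGroup V] [Module F V] [FiniteDimensional F V]
  {f g : Module.End F V}

theorem isConj_of_isSemisimple_of_charpoly_eq (hf : f.IsSemisimple) (hg : g.IsSemisimple)
    (h : f.charpoly = g.charpoly) : IsConj f g := by
  have : IsSemisimpleModule F[X] (Module.AEval' f) := hf
  have : IsSemisimpleModule F[X] (Module.AEval' g) := hg
  rw [← actionCharpoly_aeval' f, ← actionCharpoly_aeval' g] at h
  obtain ⟨e⟩ := nonempty_linearEquiv_of_actionCharpoly_eq h
  exact isConj_of_linearEquiv_aeval' e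

theorem exists_isNilpotent_commute_isConj_add_of_charpoly_eq [PerfectField F]
    (hg : g.IsSemisimple) (h : f.charpoly = g.charpoly) :
    ∃ ν : Module.End F V, IsNilpotent ν ∧ Commute ν g ∧ IsConj f (g + ν) := by
  obtain ⟨ν, hνf, s, hsf, hν, hs, hf⟩ := f.exists_isNilpotent_isSemisimple
  have hcomm : Commute ν s := (Algebra.commute_of_mem_adjoin_singleton_of_commute hνf
    (Algebra.commute_of_mem_adjoin_self hsf).symm).symm
  rw [add_comm] at hf
  have hchar : s.charpoly = g.charpoly := by
    rw [← linearMap_charpoly_add_of_isNilpotent hν hcomm.symm, ← hf, h]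
  rw [hf]
  exact exists_isNilpotent_commute_isConj_add
    (isConj_of_isSemisimple_of_charpoly_eq hs hg hchar) hν hcomm

end Endomorphism

section Closure

variable {R : Type*} [CommRing R] {m : Type*} [Fintype m] [DecidableEq m]

theorem matrix_charpoly_eq_of_isConj {A B : Matrix m m R} (h : IsConj A B) :
    A.charpoly = B.charpoly := by
  obtain ⟨c, rfl⟩ := isConj_iff_exists_eq_mul_mul_inv.mp h
  rw [Matrix.coe_units_inv, Matrix.charpoly_units_conj]

variable [TopologicalSpace R] [IsTopologicalRing R]

theorem continuous_matrix_charpoly_coeff (k : ℕ) :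
    Continuous fun A : Matrix m m R ↦ A.charpoly.coeff k := by
  have heval (A : Matrix m m R) : A.charpoly.coeff k =
      MvPolynomial.eval (fun ij ↦ A ij.1 ij.2) ((Matrix.charpoly.univ R m).coeff k) :=
    (Matrix.charpoly.univ_coeff_eval₂Hom m (RingHom.id R) (fun ij ↦ A ij.1 ij.2) k).symm
  simp only [heval]
  exact (MvPolynomial.continuous_eval _).comp (by fun_prop)

theorem matrix_charpoly_eq_of_mem_closure_isConj [T1Space R] {A B : Matrix m m R}
    (h : A ∈ closure {Y | IsConj B Y}) : A.charpoly = B.charpoly := by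
  ext k
  have hclosed : IsClosed {Y : Matrix m m R | Y.charpoly.coeff k = B.charpoly.coeff k} :=
    isClosed_singleton.preimage (continuous_matrix_charpoly_coeff k)
  refine closure_minimal (fun Y hY ↦ ?_) hclosed h
  exact congrArg (coeff · k) (matrix_charpoly_eq_of_isConj hY).symm

end Closure

theorem stmt_10_general {F : Type*} [Field F] [PerfectField F] [TopologicalSpace F]
    [IsTopologicalRing F] [T1Space F] {m : Type*} [Fintype m] [DecidableEq m]
    (γ X : Matrix m m F) (hγ : γ.IsSemisimple)
    (hX : γ ∈ closure
      {Y : Matrix m m F | ∃ g : GL m F,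
        Y = (g : Matrix m m F) * X * ((g⁻¹ : GL m F) : Matrix m m F)}) :
    ∃ N : Matrix m m F, IsNilpotent N ∧ N * γ = γ * N ∧
      ∃ g : GL m F, X = (g : Matrix m m F) * (γ + N) * ((g⁻¹ : GL m F) : Matrix m m F) := by
  simp only [← isConj_iff_exists_eq_mul_mul_inv] at hX ⊢
  have hchar : (Matrix.toLin' X).charpoly = (Matrix.toLin' γ).charpoly := by
    rw [Matrix.charpoly_toLin', Matrix.charpoly_toLin', matrix_charpoly_eq_of_mem_closure_isConj hX]
  obtain ⟨ν, hν, hcomm, hconj⟩ := exists_isNilpotent_commute_isConj_add_of_charpoly_eq hγ hchar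
  let Φ : Module.End F (m → F) ≃ₐ[F] Matrix m m F := LinearMap.toMatrixAlgEquiv'
  have hΦ (A : Matrix m m F) : Φ (Matrix.toLin' A) = A := LinearMap.toMatrix'_toLin' A
  refine ⟨Φ ν, hν.map Φ, hΦ γ ▸ (hcomm.map Φ).eq, ?_⟩
  have hΦconj := (Φ : Module.End F (m → F) →* Matrix m m F).map_isConj hconj.symm
  simpa [hΦ] using hΦconj

/-- Over a nontrivially normed field of characteristic zero, if a semisimple matrix `γ`
lies in the closure of the conjugation orbit of `X`, then `X` is conjugate to `γ + N`
for some nilpotent matrix `N` commuting with `γ`. -/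
theorem stmt_10 {F : Type*} [NontriviallyNormedField F] [CharZero F] {n : ℕ}
    (γ X : Matrix (Fin n) (Fin n) F) (hγ : γ.IsSemisimple)
    (hX : γ ∈ closure
      {Y : Matrix (Fin n) (Fin n) F | ∃ g : GL (Fin n) F,
        Y = (g : Matrix (Fin n) (Fin n) F) * X *
          ((g⁻¹ : GL (Fin n) F) : Matrix (Fin n) (Fin n) F)}) :
    ∃ N : Matrix (Fin n) (Fin n) F, IsNilpotent N ∧ N * γ = γ * N ∧
      ∃ g : GL (Fin n) F, X = (g : Matrix (Fin n) (Fin n) F) * (γ + N) *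
        ((g⁻¹ : GL (Fin n) F) : Matrix (Fin n) (Fin n) F) :=
  stmt_10_general γ X hγ hX
end
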